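/- For every Σ¹₂ set X ⊆ 2^ℕ there is a continuous function σ : 2^ℕ → K(2^ℕ) such that for every x ∈ 2^ℕ: x ∈ X if and only if the ideal I_{σ(x)} is not tall. (In particular the set {K ∈ K(2^ℕ) : I_K is tall} is Π¹₂-hard.) -/

import Mathlib

/-- `x` is a subset of `y`, for subsets of `α` coded as characteristic functions. -/
def subB {α : Type} (x y : α → Bool) : Prop := ∀ a, x a = true → y a = true

/-- Union of two subsets of `α` coded as characteristic functions. -/
def unionB {α : Type} (x y : α → Bool) : α → Bool := fun a => x a || y a

/-- The set coded by a characteristic function. -/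
def suppB {α : Type} (x : α → Bool) : Set α := {a | x a = true}

/-- The coded set is infinite. -/
def InfiniteB {α : Type} (x : α → Bool) : Prop := (suppB x).Infinite

/-- `I` is an ideal: closed under subsets and (finite) unions. -/
def IsIdealB {α : Type} (I : Set (α → Bool)) : Prop :=
  (∀ x ∈ I, ∀ y, subB y x → y ∈ I) ∧ ∀ x ∈ I, ∀ y ∈ I, unionB x y ∈ I

/-- `I` is tall: every infinite set has an infinite subset in `I`. -/
def IsTallB {α : Type} (I : Set (α → Bool)) : Prop :=
  ∀ x, InfiniteB x → ∃ y ∈ I, InfiniteB y ∧ subB y x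

/-- `I` contains all finite sets. -/
def ContainsFinB {α : Type} (I : Set (α → Bool)) : Prop :=
  ∀ x : α → Bool, (suppB x).Finite → x ∈ I

/-- `I` is an `F_σ` subset of the Cantor space `α → Bool`. -/
def IsFsigmaB {α : Type} (I : Set (α → Bool)) : Prop :=
  ∃ F : ℕ → Set (α → Bool), (∀ n, IsClosed (F n)) ∧ I = ⋃ n, F n

/-- Katětov order: `I ≤_K J` via some `f` with `f⁻¹[A] ∈ J` for all `A ∈ I`. -/
def KatLE {α β : Type} (I : Set (α → Bool)) (J : Set (β → Bool)) : Prop :=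
  ∃ f : β → α, ∀ x ∈ I, (fun b => x (f b)) ∈ J


/-- `⟨K⟩ⁿ`: unions of `n+1` elements of `K`. -/
def angleB (K : Set (ℕ → Bool)) (n : ℕ) : Set (ℕ → Bool) :=
  {x | ∃ f : Fin (n + 1) → (ℕ → Bool), (∀ i, f i ∈ K) ∧ ∀ m, x m = true ↔ ∃ i, f i m = true}

/-- `↓M`: downward closure of `M`. -/
def downB (M : Set (ℕ → Bool)) : Set (ℕ → Bool) := {x | ∃ y ∈ M, subB x y}

/-- `I_K = ⋃ₙ ↓⟨K⟩ⁿ`. -/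
def IdealOfCode (K : Set (ℕ → Bool)) : Set (ℕ → Bool) := ⋃ n, downB (angleB K n)


/-- A compatible metric on the Cantor space, so that the hyperspace `K(2^ℕ)` of (nonempty)
compact subsets carries the Hausdorff metric (inducing the Vietoris topology). -/
noncomputable instance : MetricSpace (ℕ → Bool) := TopologicalSpace.metrizableSpaceMetric _

/-- `Y` is `Σ¹₂`: the projection along `ℕ^ℕ` of a set whose complement is analytic. -/
def IsSigma12 {X : Type} [TopologicalSpace X] (Y : Set X) : Prop :=
  ∃ C : Set (X × (ℕ → ℕ)), MeasureTheory.AnalyticSet Cᶜ ∧ Y = {z | ∃ g : ℕ → ℕ, (z, g) ∈ C}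

/-!
The complement of the set `C` witnessing that `X` is `Σ¹₂` is the projection of a closed set `F` of
triples `((x, g), h)`, so `x ∈ X` iff some `g` has no `h` with `((x, g), h) ∈ F`. Codes of finite
sequences turn a subset of `ℕ` into a set of nodes of `ℕ^{<ℕ}`. Let `K x` consist of the sets `y` of
nodes such that any `k + 1` nodes of `y` on one branch `g` are accompanied by a triple of `F` which
agrees with `x` and `g` below `k` and whose `h` is bounded, below `k`, by the heights of these
nodes. This family is closed and hereditary, and membership of a finite `y` depends on finitely
many values of `x`; hence `x ↦ K x` is continuous, and `I_{K x}` is tall iff `K x` is.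

If `K x` contains an infinite subset of a branch `g`, the triples it provides have bounded third
coordinates, so by compactness they accumulate at some `((x, g), h) ∈ F`. Hence `I_{K x}` is not
tall when `x ∈ X`. Conversely, suppose every `g` has an `h`. By Ramsey's theorem an infinite set of
nodes contains an infinite antichain, which lies in `K x` since it meets every branch at most once,
or an infinite part of some branch `g`, which can be thinned out until its heights dominate an `h`
with `((x, g), h) ∈ F`, and then lies in `K x`.
-/

open Filter Topology TopologicalSpace

section Hyperspace

theorem isLocallyConstant_of_dependsOn_finite {ι Y : Type*} {E : ι → Type*}
    [∀ i, TopologicalSpace (E i)] [∀ i, DiscreteTopology (E i)] {f : (∀ i, E i) → Y} {s : Set ι}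
    (hs : s.Finite) (hf : DependsOn f s) : IsLocallyConstant f := by
  refine (IsLocallyConstant.iff_eventually_eq f).2 fun x => ?_
  have hagree : ∀ᶠ x' in 𝓝 x, ∀ i ∈ s, x' i = x i :=
    (eventually_all_finite hs).2 fun i _ =>
      (IsLocallyConstant.iff_continuous _).2 (continuous_apply i) |>.eventually_eq x
  exact hagree.mono fun x' hx' => hf hx'

variable {α : Type}

/-- The trace `y ∩ S` of a coded set `y` on a finite set `S`. -/
noncomputable def restrictB (S : Finset α) (y : α → Bool) : α → Bool :=
  y ⊓ (S : Set α).boolIndicator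

theorem restrictB_le (S : Finset α) (y : α → Bool) : restrictB S y ≤ y :=
  inf_le_left

theorem restrictB_apply_of_mem {S : Finset α} {a : α} (ha : a ∈ S) (y : α → Bool) :
    restrictB S y a = y a := by
  simp [restrictB, (Set.mem_iff_boolIndicator _ _).1 (Finset.mem_coe.2 ha)]

theorem restrictB_apply_of_notMem {S : Finset α} {a : α} (ha : a ∉ S) (y : α → Bool) :
    restrictB S y a = false := by
  simp [restrictB, (Set.notMem_iff_boolIndicator _ _).1 (Finset.mem_coe.not.2 ha)]

theorem finite_suppB_restrictB (S : Finset α) (y : α → Bool) : (suppB (restrictB S y)).Finite :=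
  S.finite_toSet.subset fun a (ha : restrictB S y a = true) => by
    by_contra haS
    simp [restrictB_apply_of_notMem haS] at ha

theorem dependsOn_restrictB (S : Finset α) : DependsOn (restrictB S) (S : Set α) := by
  intro y z hyz
  funext a
  by_cases ha : a ∈ S
  · rw [restrictB_apply_of_mem ha, restrictB_apply_of_mem ha, hyz a ha]
  · rw [restrictB_apply_of_notMem ha, restrictB_apply_of_notMem ha]

theorem tendsto_restrictB (y : α → Bool) : Tendsto (restrictB · y) atTop (𝓝 y) := by
  refine tendsto_pi_nhds.2 fun a => tendsto_const_nhds.congr' ?_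
  filter_upwards [eventually_ge_atTop {a}] with S hS
  exact (restrictB_apply_of_mem (Finset.singleton_subset_iff.1 hS) y).symm

theorem mem_iff_forall_restrictB_mem {K : Set (α → Bool)} (hclosed : IsClosed K)
    (hlower : IsLowerSet K) {y : α → Bool} : y ∈ K ↔ ∀ S, restrictB S y ∈ K :=
  ⟨fun hy S => hlower (restrictB_le S y) hy,
    fun hy => hclosed.mem_of_tendsto (tendsto_restrictB y) (Eventually.of_forall hy)⟩

variable {T : Type*} [TopologicalSpace T]

theorem isClosed_graph_of_isLowerSet {K : T → Set (α → Bool)} (hclosed : ∀ t, IsClosed (K t))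
    (hlower : ∀ t, IsLowerSet (K t))
    (hloc : ∀ y, (suppB y).Finite → IsLocallyConstant fun t => y ∈ K t) :
    IsClosed {p : T × (α → Bool) | p.2 ∈ K p.1} := by
  have hlocal (S : Finset α) :
      IsLocallyConstant fun p : T × (α → Bool) => restrictB S p.2 ∈ K p.1 := by
    refine (IsLocallyConstant.iff_eventually_eq _).2 fun ⟨t, y⟩ => ?_
    have ht := (hloc _ (finite_suppB_restrictB S y)).eventually_eq t
    have hy := (isLocallyConstant_of_dependsOn_finite S.finite_toSet
      (dependsOn_restrictB S)).eventually_eq y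
    filter_upwards [ht.prod_nhds hy] with p hp
    rw [hp.2, hp.1]
  simp_rw [fun p : T × (α → Bool) =>
    mem_iff_forall_restrictB_mem (hclosed p.1) (hlower p.1) (y := p.2), Set.ofPred_forall]
  refine isClosed_iInter fun S => ?_
  simpa only [eq_iff_iff, iff_true] using (hlocal S).isClosed_fiber True

theorem continuous_of_isLowerSet_of_isLocallyConstant {σ : T → NonemptyCompacts (α → Bool)}
    (hlower : ∀ t, IsLowerSet (σ t : Set (α → Bool)))
    (hloc : ∀ y, (suppB y).Finite → IsLocallyConstant fun t => y ∈ (σ t : Set (α → Bool))) :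
    Continuous σ := by
  let _ : TopologicalSpace (Set (α → Bool)) := TopologicalSpace.vietoris _
  refine NonemptyCompacts.isEmbedding_coe.continuous_iff.2
    (vietoris.continuous_iff.2 ⟨fun U hU => ?_, fun F hF => ?_⟩)
  · have hgraph := isClosed_graph_of_isLowerSet (fun t => (σ t).isCompact.isClosed) hlower hloc
    rw [← isClosed_compl_iff]
    convert isClosedMap_fst_of_compactSpace _
      (hgraph.inter (hU.isClosed_compl.preimage continuous_snd)) using 1
    ext t
    simp [Set.subset_def]
  · refine isOpen_compl_iff.1 (isOpen_iff_mem_nhds.2 fun t ht => ?_)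
    obtain ⟨y, hy, hyF⟩ := Set.not_subset.1 ht
    obtain ⟨S, hS⟩ := ((tendsto_restrictB y).eventually (hF.isOpen_compl.mem_nhds hyF)).exists
    filter_upwards [(hloc _ (finite_suppB_restrictB S y)).eventually_eq t] with t' ht' hsub
    exact hS (hsub (ht'.mpr (hlower t (restrictB_le S y) hy)))

end Hyperspace

section Tallness

-- `subB` unfolds to the pointwise order on `ℕ → Bool`: hereditary families are the lower sets.
variable {K : Set (ℕ → Bool)}

theorem subset_idealOfCode (K : Set (ℕ → Bool)) : K ⊆ IdealOfCode K := fun y hy =>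
  Set.mem_iUnion.2 ⟨0, y, ⟨fun _ => y, fun _ => hy, fun m => by simp⟩, le_refl y⟩

theorem exists_infiniteB_le_of_mem_idealOfCode (hK : IsLowerSet K) {y : ℕ → Bool}
    (hy : y ∈ IdealOfCode K) (hinf : InfiniteB y) : ∃ z ∈ K, InfiniteB z ∧ z ≤ y := by
  obtain ⟨n, u, ⟨f, hf, hu⟩, hyu⟩ := Set.mem_iUnion.1 hy
  have hcover : suppB y ⊆ ⋃ i, suppB (f i ⊓ y) := fun a ha => by
    obtain ⟨i, hi⟩ := (hu a).1 (hyu a ha)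
    exact Set.mem_iUnion.2 ⟨i, (congrArg₂ (· ⊓ ·) hi ha : f i a ⊓ y a = true ⊓ true)⟩
  obtain ⟨i, hi⟩ : ∃ i, InfiniteB (f i ⊓ y) := by
    by_contra! hfin
    exact hinf ((Set.finite_iUnion fun i => Set.not_infinite.1 (hfin i)).subset hcover)
  exact ⟨f i ⊓ y, hK inf_le_left (hf i), hi, inf_le_right⟩

theorem isTallB_idealOfCode_iff (hK : IsLowerSet K) : IsTallB (IdealOfCode K) ↔ IsTallB K := by
  refine ⟨fun h x hx => ?_, fun h x hx => ?_⟩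
  · obtain ⟨y, hy, hyinf, hyx⟩ := h x hx
    obtain ⟨z, hz, hzinf, hzy⟩ := exists_infiniteB_le_of_mem_idealOfCode hK hy hyinf
    exact ⟨z, hz, hzinf, hzy.trans hyx⟩
  · obtain ⟨y, hy, hyinf, hyx⟩ := h x hx
    exact ⟨y, subset_idealOfCode K hy, hyinf, hyx⟩

end Tallness

section Branches

-- `PiNat.res g n` lists `g (n - 1), …, g 0`, so initial segments of a branch are *suffixes*.
open PiNat (res res_length res_eq_res)

variable {α : Type*}

theorem res_injective_right (g : ℕ → α) : Function.Injective (res g) := fun m n h => by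
  simpa only [res_length] using congrArg List.length h

theorem res_suffix_res (g : ℕ → α) {m n : ℕ} (h : m ≤ n) : res g m <:+ res g n := by
  induction n, h using Nat.le_induction with
  | base => exact List.suffix_rfl
  | succ n _ ih => exact ih.trans (List.suffix_cons _ _)

theorem apply_eq_of_res_suffix_res {g h : ℕ → α} {m n i : ℕ} (hsuff : res g m <:+ res h n)
    (hi : i < m) : g i = h i := by
  have hmn : m ≤ n := by simpa only [res_length] using hsuff.length_le
  have hres : res g m = res h m :=
    (List.suffix_of_suffix_length_le hsuff (res_suffix_res h hmn) (by simp)).eq_of_length (by simp)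
  exact res_eq_res.1 hres hi

theorem exists_res_length_eq [Nonempty α] (l : List α) : ∃ g : ℕ → α, res g l.length = l := by
  induction l with
  | nil => exact ⟨Classical.arbitrary _, rfl⟩
  | cons a l ih =>
    obtain ⟨g, hg⟩ := ih
    refine ⟨Function.update g l.length a, ?_⟩
    have hagree : res (Function.update g l.length a) l.length = res g l.length :=
      res_eq_res.2 fun m hm => Function.update_of_ne hm.ne _ _
    simp [hagree, hg]

theorem exists_subset_range_res_of_isChain [Nonempty α] {T : Set (List α)}
    (hT : IsChain (· <:+ ·) T) (hinf : T.Infinite) : ∃ g : ℕ → α, T ⊆ Set.range (res g) := by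
  have hinj : Set.InjOn List.length T := fun l hl l' hl' hlen =>
    (hT.total hl hl').elim (·.eq_of_length hlen) fun h => (h.eq_of_length hlen.symm).symm
  have hlong (i : ℕ) : ∃ l ∈ T, i < l.length := by
    simpa using (hinf.image hinj).exists_gt i
  choose l hlT hl using hlong
  choose u hu using exists_res_length_eq (α := α)
  refine ⟨fun i => u (l i) i, fun t ht => ⟨t.length, ?_⟩⟩
  refine .trans (res_eq_res.2 fun i hi => ?_) (hu t)
  rcases hT.total ht (hlT i) with h | h
  · rw [← hu t, ← hu (l i)] at h
    exact (apply_eq_of_res_suffix_res h hi).symm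
  · rw [← hu t, ← hu (l i)] at h
    exact apply_eq_of_res_suffix_res h (hl i)

theorem exists_infinite_isChain_or_isAntichain {S : Set (List α)} (hS : S.Infinite) :
    ∃ T ⊆ S, T.Infinite ∧ (IsChain (· <:+ ·) T ∨ IsAntichain (· <:+ ·) T) := by
  let s : ℕ → List α := fun n => hS.natEmbedding S n
  have hs : Function.Injective s :=
    Subtype.val_injective.comp (hS.natEmbedding S).injective
  obtain ⟨φ, hφ⟩ := (wellQuasiOrdered_le (α := ℕ)).exists_monotone_subseq (List.length ∘ s)
  obtain ⟨ψ, hψ⟩ := exists_increasing_or_nonincreasing_subseq (· <:+ ·) (s ∘ φ)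
  have hinj : Function.Injective (s ∘ φ ∘ ψ) := hs.comp (φ.injective.comp ψ.injective)
  refine ⟨Set.range (s ∘ φ ∘ ψ), Set.range_subset_iff.2 fun n => Subtype.prop _,
    Set.infinite_range_of_injective hinj, hψ.imp (fun hchain => ?_) fun hanti => ?_⟩
  · rintro _ ⟨m, rfl⟩ _ ⟨n, rfl⟩ hne
    exact (ne_of_apply_ne _ hne).lt_or_gt.imp (hchain m n) (hchain n m)
  · rintro _ ⟨m, rfl⟩ _ ⟨n, rfl⟩ hne hsuff
    rcases (ne_of_apply_ne _ hne).lt_or_gt with hmn | hnm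
    · exact hanti m n hmn hsuff
    · exact hne (hsuff.eq_of_length_le (hφ _ _ (ψ.monotone hnm.le)))

end Branches

section Coding

open Encodable

/-- The set of codes of the members of `T`, as a point of Cantor space. -/
noncomputable def codes (T : Set (List ℕ)) : ℕ → Bool := (encode '' T).boolIndicator

@[simp]
theorem codes_encode {T : Set (List ℕ)} {l : List ℕ} : codes T (encode l) = true ↔ l ∈ T := by
  rw [codes, ← Set.mem_iff_boolIndicator, encode_injective.mem_set_image]

theorem suppB_codes (T : Set (List ℕ)) : suppB (codes T) = encode '' T :=
  Set.preimage_boolIndicator_true _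

theorem infiniteB_codes {T : Set (List ℕ)} (hT : T.Infinite) : InfiniteB (codes T) := by
  rw [InfiniteB, suppB_codes]
  exact hT.image encode_injective.injOn

theorem infinite_setOf_encode {y : ℕ → Bool} (hy : InfiniteB y) :
    {l : List ℕ | y (encode l) = true}.Infinite :=
  hy.preimage fun a _ => ⟨Denumerable.ofNat (List ℕ) a, Denumerable.encode_ofNat a⟩

theorem codes_le_iff {T : Set (List ℕ)} {y : ℕ → Bool} :
    codes T ≤ y ↔ T ⊆ {l | y (encode l) = true} :=
  (show codes T ≤ y ↔ suppB (codes T) ⊆ suppB y from Iff.rfl).trans <| by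
    rw [suppB_codes, Set.image_subset_iff]
    rfl

theorem lt_ncard_suppB_of_branch {y : ℕ → Bool} (hfin : (suppB y).Finite) {g n : ℕ → ℕ}
    (hn : StrictMono n) {k : ℕ} (hy : ∀ i ≤ k, y (encode (PiNat.res g (n i))) = true) :
    k < (suppB y).ncard := by
  have hinj : Function.Injective fun i => encode (PiNat.res g (n i)) :=
    encode_injective.comp ((res_injective_right g).comp hn.injective)
  calc k < (Set.Iic k).ncard := by simp
    _ ≤ (suppB y).ncard := Set.ncard_le_ncard_of_injOn _ hy hinj.injOn hfin

end Coding

section Analytic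

variable {Z : Type*} [TopologicalSpace Z]

theorem exists_isClosed_mem_iff_of_analyticSet [T2Space Z] {A : Set Z}
    (hA : MeasureTheory.AnalyticSet A) :
    ∃ F : Set (Z × (ℕ → ℕ)), IsClosed F ∧ ∀ z, z ∈ A ↔ ∃ h, (z, h) ∈ F := by
  rw [MeasureTheory.AnalyticSet] at hA
  rcases hA with rfl | ⟨f, hf, rfl⟩
  · exact ⟨∅, isClosed_empty, by simp⟩
  · exact ⟨{p | f p.2 = p.1}, isClosed_eq (hf.comp continuous_snd) continuous_fst,
      fun z => Iff.rfl⟩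

theorem exists_mem_of_tendsto_of_bounded {F : Set (Z × (ℕ → ℕ))} (hF : IsClosed F) {z : Z}
    {u : ℕ → Z} {h : ℕ → ℕ → ℕ} (hmem : ∀ k, (u k, h k) ∈ F) (hu : Tendsto u atTop (𝓝 z))
    (hbdd : ∀ i, IsBoundedUnder (· ≤ ·) atTop fun k => h k i) : ∃ h₀, (z, h₀) ∈ F := by
  choose b hb using fun i => (hbdd i).bddAbove_range
  have hIcc (k : ℕ) : h k ∈ Set.Icc 0 b := ⟨fun _ => Nat.zero_le _, fun i => hb i ⟨k, rfl⟩⟩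
  obtain ⟨h₀, -, φ, hφ, hlim⟩ := isCompact_Icc.tendsto_subseq hIcc
  exact ⟨h₀, hF.mem_of_tendsto ((hu.comp hφ.tendsto_atTop).prodMk_nhds hlim)
    (Eventually.of_forall fun k => hmem (φ k))⟩

theorem tendsto_of_forall_lt_eq {u : ℕ → ℕ → Z} {x : ℕ → Z} (hux : ∀ k, ∀ i < k, u k i = x i) :
    Tendsto u atTop (𝓝 x) :=
  tendsto_pi_nhds.2 fun i => tendsto_const_nhds.congr' <|
    (eventually_gt_atTop i).mono fun k hk => (hux k i hk).symm

end Analytic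

theorem apply_le_apply_of_mem_range {ι : Type*} [LinearOrder ι] {ψ n : ℕ → ι}
    (hψ : StrictMono ψ) (hn : StrictMono n) {k : ℕ} (hk : ∀ i ≤ k, n i ∈ Set.range ψ) :
    ψ k ≤ n k := by
  induction k with
  | zero =>
    obtain ⟨j, hj⟩ := hk 0 le_rfl
    exact hj ▸ hψ.monotone j.zero_le
  | succ k ih =>
    obtain ⟨j, hj⟩ := hk (k + 1) le_rfl
    have hlt : ψ k < ψ j :=
      hj ▸ (ih fun i hi => hk i (hi.trans k.le_succ)).trans_lt (hn k.lt_succ_self)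
    exact hj ▸ hψ.monotone (hψ.lt_iff_lt.1 hlt)

section ApproxFamily

open Encodable
open PiNat (res res_eq_res)

variable {β : Type*} {F : Set (((ℕ → β) × (ℕ → ℕ)) × (ℕ → ℕ))} {x : ℕ → β}

/-- For a set `F` of triples `((x, g), h)`, the sets `y` of codes of finite sequences such that
whenever `y` contains `k + 1` nodes of a branch `g`, at heights `n 0 < ⋯ < n k`, some triple in `F`
agrees with `x` and `g` below `k` and has its witness `h` bounded by the heights. -/
def approxFamily (F : Set (((ℕ → β) × (ℕ → ℕ)) × (ℕ → ℕ))) (x : ℕ → β) : Set (ℕ → Bool) :=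
  {y | ∀ (g n : ℕ → ℕ) (k : ℕ), StrictMono n → (∀ i ≤ k, y (encode (res g (n i))) = true) →
    ∃ x' g' h, ((x', g'), h) ∈ F ∧ ∀ i < k, x' i = x i ∧ g' i = g i ∧ h i ≤ n i}

theorem isLowerSet_approxFamily (F : Set (((ℕ → β) × (ℕ → ℕ)) × (ℕ → ℕ))) (x : ℕ → β) :
    IsLowerSet (approxFamily F x) := fun _ _ hzy hy g n k hn hz =>
  hy g n k hn fun i hi => hzy _ (hz i hi)

theorem isClosed_approxFamily (F : Set (((ℕ → β) × (ℕ → ℕ)) × (ℕ → ℕ))) (x : ℕ → β) :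
    IsClosed (approxFamily F x) := by
  simp only [approxFamily, Set.ofPred_forall]
  refine isClosed_iInter fun g => isClosed_iInter fun n => isClosed_iInter fun k =>
    isClosed_iInter fun _ => isClosed_imp ?_ isClosed_const
  simp only [Set.ofPred_forall]
  exact (Set.finite_le_nat k).isOpen_biInter fun i _ =>
    (isOpen_discrete {true}).preimage (continuous_apply (A := fun _ : ℕ => Bool) _)

theorem bot_mem_approxFamily (F : Set (((ℕ → β) × (ℕ → ℕ)) × (ℕ → ℕ))) (x : ℕ → β) :
    ⊥ ∈ approxFamily F x := fun _ _ k _ hy => absurd (hy 0 k.zero_le) Bool.false_ne_true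

theorem dependsOn_mem_approxFamily {y : ℕ → Bool} (hfin : (suppB y).Finite) :
    DependsOn (fun x => y ∈ approxFamily F x) (Set.Iio (suppB y).ncard) := by
  have hmono {x₁ x₂ : ℕ → β} (hx : ∀ i ∈ Set.Iio (suppB y).ncard, x₁ i = x₂ i)
      (hy : y ∈ approxFamily F x₁) : y ∈ approxFamily F x₂ := fun g n k hn hyk => by
    obtain ⟨x', g', h, hF, hagree⟩ := hy g n k hn hyk
    refine ⟨x', g', h, hF, fun i hi => ?_⟩
    rw [← hx i (hi.trans (lt_ncard_suppB_of_branch hfin hn hyk))]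
    exact hagree i hi
  exact fun x₁ x₂ hx => propext ⟨hmono hx, hmono fun i hi => (hx i hi).symm⟩

/-- `approxFamily F` as a map into the hyperspace of nonempty compact sets. -/
def approxCode (F : Set (((ℕ → β) × (ℕ → ℕ)) × (ℕ → ℕ))) (x : ℕ → β) :
    NonemptyCompacts (ℕ → Bool) :=
  ⟨⟨approxFamily F x, (isClosed_approxFamily F x).isCompact⟩, ⊥, bot_mem_approxFamily F x⟩

theorem continuous_approxCode [TopologicalSpace β] [DiscreteTopology β] :
    Continuous (approxCode F) :=
  continuous_of_isLowerSet_of_isLocallyConstant (isLowerSet_approxFamily F) fun _ hfin =>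
    isLocallyConstant_of_dependsOn_finite (Set.finite_Iio _) (dependsOn_mem_approxFamily hfin)

theorem exists_mem_of_infiniteB_le_branch [TopologicalSpace β] (hF : IsClosed F) {y : ℕ → Bool}
    (hy : y ∈ approxFamily F x) (hinf : InfiniteB y) {g : ℕ → ℕ}
    (hyg : y ≤ codes (Set.range (res g))) : ∃ h, ((x, g), h) ∈ F := by
  have hheights : {m | y (encode (res g m)) = true}.Infinite :=
    (infinite_setOf_encode hinf).preimage fun l hl => codes_encode.1 (hyg _ hl)
  let n := Nat.nth fun m => y (encode (res g m)) = true
  choose x' g' h hmem hagree using fun k =>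
    hy g n k (Nat.nth_strictMono hheights) fun i _ => Nat.nth_mem_of_infinite hheights i
  refine exists_mem_of_tendsto_of_bounded hF hmem
    ((tendsto_of_forall_lt_eq fun k i hi => (hagree k i hi).1).prodMk_nhds
      (tendsto_of_forall_lt_eq fun k i hi => (hagree k i hi).2.1)) fun i => ⟨n i, ?_⟩
  exact eventually_map.2 ((eventually_gt_atTop i).mono fun k hk => (hagree k i hk).2.2)

theorem codes_mem_approxFamily_of_isAntichain (hF : F.Nonempty) {T : Set (List ℕ)}
    (hT : IsAntichain (· <:+ ·) T) : codes T ∈ approxFamily F x := by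
  intro g n k hn hk
  obtain rfl | hpos := k.eq_zero_or_pos
  · obtain ⟨⟨⟨x', g'⟩, h⟩, hmem⟩ := hF
    exact ⟨x', g', h, hmem, fun i hi => absurd hi i.not_lt_zero⟩
  · have heq := hT.eq (codes_encode.1 (hk 0 k.zero_le)) (codes_encode.1 (hk 1 hpos))
      (res_suffix_res g (hn Nat.zero_lt_one).le)
    exact absurd (hn.injective (res_injective_right g heq)) Nat.zero_ne_one

theorem codes_mem_approxFamily_of_sparse_branch {g h ψ : ℕ → ℕ} (hmem : ((x, g), h) ∈ F)
    (hψ : StrictMono ψ) (hh : h ≤ ψ) :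
    codes (Set.range fun i => res g (ψ i)) ∈ approxFamily F x := by
  intro g' n k hn hk
  have hbranch (i : ℕ) (hi : i ≤ k) : n i ∈ Set.range ψ ∧ res g (n i) = res g' (n i) := by
    obtain ⟨j, hj⟩ := codes_encode.1 (hk i hi)
    have hheight : ψ j = n i := by simpa only [PiNat.res_length] using congrArg List.length hj
    exact ⟨⟨j, hheight⟩, hheight ▸ hj⟩
  refine ⟨x, g, h, hmem, fun i hi => ⟨rfl, ?_, ?_⟩⟩
  · exact res_eq_res.1 (hbranch k le_rfl).2 (hi.trans_le hn.le_apply)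
  · exact (hh i).trans
      (apply_le_apply_of_mem_range hψ hn fun j hj => (hbranch j (hj.trans hi.le)).1)

theorem exists_subset_codes_mem_of_branch {g h : ℕ → ℕ} (hmem : ((x, g), h) ∈ F)
    {T : Set (List ℕ)} (hT : T.Infinite) (hTg : T ⊆ Set.range (res g)) :
    ∃ T' ⊆ T, T'.Infinite ∧ codes T' ∈ approxFamily F x := by
  have hfreq (i : ℕ) : ∃ᶠ m in atTop, res g m ∈ T ∧ h i ≤ m :=
    (Nat.frequently_atTop_iff_infinite.2 (hT.preimage hTg)).and_eventually
      (eventually_ge_atTop (h i))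
  obtain ⟨ψ, hψ, hψT⟩ := extraction_forall_of_frequently hfreq
  exact ⟨_, Set.range_subset_iff.2 fun i => (hψT i).1,
    Set.infinite_range_of_injective ((res_injective_right g).comp hψ.injective),
    codes_mem_approxFamily_of_sparse_branch hmem hψ fun i => (hψT i).2⟩

theorem isTallB_approxFamily (hx : ∀ g, ∃ h, ((x, g), h) ∈ F) : IsTallB (approxFamily F x) := by
  intro A hA
  obtain ⟨T, hTA, hT, hchain | hanti⟩ :=
    exists_infinite_isChain_or_isAntichain (infinite_setOf_encode hA)
  · obtain ⟨g, hTg⟩ := exists_subset_range_res_of_isChain hchain hT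
    obtain ⟨h, hmem⟩ := hx g
    obtain ⟨T', hT'T, hT', hcodes⟩ := exists_subset_codes_mem_of_branch hmem hT hTg
    exact ⟨codes T', hcodes, infiniteB_codes hT', codes_le_iff.2 (hT'T.trans hTA)⟩
  · obtain ⟨h, hmem⟩ := hx 0
    exact ⟨codes T, codes_mem_approxFamily_of_isAntichain ⟨_, hmem⟩ hanti, infiniteB_codes hT,
      codes_le_iff.2 hTA⟩

theorem isTallB_approxFamily_iff [TopologicalSpace β] (hF : IsClosed F) :
    IsTallB (approxFamily F x) ↔ ∀ g, ∃ h, ((x, g), h) ∈ F := by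
  refine ⟨fun htall g => ?_, isTallB_approxFamily⟩
  obtain ⟨y, hy, hinf, hyg⟩ := htall (codes (Set.range (res g)))
    (infiniteB_codes (Set.infinite_range_of_injective (res_injective_right g)))
  exact exists_mem_of_infiniteB_le_branch hF hy hinf hyg

end ApproxFamily

theorem sigma12_reduces_to_non_tall_codes_general {β : Type} [TopologicalSpace β]
    [DiscreteTopology β] (X : Set (ℕ → β)) (hX : IsSigma12 X) :
    ∃ σ : (ℕ → β) → NonemptyCompacts (ℕ → Bool),
      Continuous σ ∧ ∀ x : ℕ → β, x ∈ X ↔ ¬ IsTallB (IdealOfCode (σ x : Set (ℕ → Bool))) := by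
  obtain ⟨C, hC, rfl⟩ := hX
  obtain ⟨F, hF, hCF⟩ := exists_isClosed_mem_iff_of_analyticSet hC
  refine ⟨approxCode F, continuous_approxCode, fun x => ?_⟩
  have htall : IsTallB (IdealOfCode (approxCode F x)) ↔ ∀ g, (x, g) ∈ Cᶜ :=
    (isTallB_idealOfCode_iff (isLowerSet_approxFamily F x)).trans <|
      (isTallB_approxFamily_iff hF).trans (forall_congr' fun g => (hCF (x, g)).symm)
  simp [htall]

/-- For every `Σ¹₂` set `X ⊆ 2^ℕ` there is a continuous map `σ` from `2^ℕ` to the hyperspace of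
compact subsets of `2^ℕ` such that `x ∈ X` iff the ideal `I_{σ(x)}` is not tall.  (In particular,
the set of codes of tall ideals is `Π¹₂`-hard.) -/
theorem sigma12_reduces_to_non_tall_codes (X : Set (ℕ → Bool)) (hX : IsSigma12 X) :
    ∃ σ : (ℕ → Bool) → TopologicalSpace.NonemptyCompacts (ℕ → Bool),
      Continuous σ ∧
      ∀ x : ℕ → Bool, x ∈ X ↔ ¬ IsTallB (IdealOfCode (σ x : Set (ℕ → Bool))) :=
  sigma12_reduces_to_non_tall_codes_general X hX
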